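/- arXiv:math/0303285 — 3 statements merged into one kernel-verified Lean document; each statement's English description precedes it below -/
import Mathlib

section
/- For all B-modules V and W (viewed also as A-modules via the quotient map A → B) and all integers n ≥ 0, the natural map Ext^n_B(V, W) → Ext^n_A(V, W) induced by restriction of scalars along A → B is an isomorphism of abelian groups. -/
universe u

open CategoryTheory Abelian

noncomputable instance moduleCatHasDerivedCategory (R : Type u) [Ring R] :
    HasDerivedCategory (ModuleCat.{u} R) :=
  HasDerivedCategory.standard _

instance moduleCatHasExt (R : Type u) [Ring R] : HasExt.{u + 1} (ModuleCat.{u} R) :=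
  hasExt_of_hasDerivedCategory _

variable {R₁ R₂ : Type u} [Ring R₁] [Ring R₂] (f : R₁ →+* R₂)

instance : (ModuleCat.restrictScalars.{u} f).Additive := ⟨rfl⟩

noncomputable instance : Limits.PreservesFiniteLimits (ModuleCat.restrictScalars.{u} f) :=
  ⟨fun _ _ _ => ⟨fun {F} => ModuleCat.preservesLimit_restrictScalars f F⟩⟩

noncomputable instance : Limits.PreservesFiniteColimits (ModuleCat.restrictScalars.{u} f) :=
  ⟨fun _ _ _ => ⟨fun {F} => ModuleCat.preservesColimit_restrictScalars f F⟩⟩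

/-- The compatibility isomorphism between `F.mapDerivedCategory` and the
single-object functors, for an exact functor `F`. -/
noncomputable def mapDerivedCategorySingleIso {C₁ C₂ : Type*} [Category C₁] [Category C₂]
    [Abelian C₁] [Abelian C₂] [HasDerivedCategory C₁] [HasDerivedCategory C₂]
    (F : C₁ ⥤ C₂) [F.Additive] [Limits.PreservesFiniteLimits F]
    [Limits.PreservesFiniteColimits F] (V : C₁) :
    F.mapDerivedCategory.obj ((DerivedCategory.singleFunctor C₁ 0).obj V) ≅
      (DerivedCategory.singleFunctor C₂ 0).obj (F.obj V) :=
  F.mapDerivedCategory.mapIso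
      (((SingleFunctors.evaluation _ _ (0 : ℤ)).mapIso
        (DerivedCategory.singleFunctorsPostcompQIso C₁)).app V) ≪≫
    F.mapDerivedCategoryFactors.app _ ≪≫
    DerivedCategory.Q.mapIso
      ((HomologicalComplex.singleMapHomologicalComplex F (ComplexShape.up ℤ) 0).app V) ≪≫
    (((SingleFunctors.evaluation _ _ (0 : ℤ)).mapIso
      (DerivedCategory.singleFunctorsPostcompQIso C₂)).app (F.obj V)).symm

/-- The natural map `Ext^n_{R₂}(V, W) → Ext^n_{R₁}(V, W)` induced by restriction
of scalars along a ring homomorphism `f : R₁ →+* R₂`. -/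
noncomputable def extRestrict {n : ℕ} {V W : ModuleCat.{u} R₂}
    (α : Abelian.Ext V W n) :
    Abelian.Ext ((ModuleCat.restrictScalars f).obj V)
      ((ModuleCat.restrictScalars f).obj W) n :=
  Abelian.Ext.homEquiv.symm <|
    (mapDerivedCategorySingleIso (ModuleCat.restrictScalars f) V).inv ≫
      (ModuleCat.restrictScalars f).mapDerivedCategory.map α.hom ≫
      (((ModuleCat.restrictScalars f).mapDerivedCategory.commShiftIso (n : ℤ)).hom.app
        ((DerivedCategory.singleFunctor (ModuleCat.{u} R₂) 0).obj W)) ≫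
      ((mapDerivedCategorySingleIso (ModuleCat.restrictScalars f) W).hom)⟦(n : ℤ)⟧'

/-! Context: `A` a ring, `I` a two-sided idempotent ideal of `A` which is
projective as a left `A`-module, `B := A / I` the quotient ring. -/

/-- The quotient ring `B = A / I`. -/
def QuotByIdeal (A : Type u) [Ring A] (I : Ideal A) : Type u :=
  RingQuot (fun a b : A => a ∈ I ∧ b = 0)

noncomputable instance (A : Type u) [Ring A] (I : Ideal A) : Ring (QuotByIdeal A I) :=
  inferInstanceAs (Ring (RingQuot _))

/-- The quotient map `A → B = A / I`. -/
noncomputable def quotByIdealProj (A : Type u) [Ring A] (I : Ideal A) :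
    A →+* QuotByIdeal A I :=
  RingQuot.mkRingHom _

lemma extRestrict_eq_mapExactFunctor {n : ℕ} {V W : ModuleCat.{u} R₂}
    (α : Abelian.Ext V W n) :
    extRestrict f α = α.mapExactFunctor (ModuleCat.restrictScalars f) := by
  have key : ∀ X : ModuleCat.{u} R₂,
      mapDerivedCategorySingleIso (ModuleCat.restrictScalars f) X =
        ((ModuleCat.restrictScalars f).mapDerivedCategorySingleFunctor 0).app X := by
    intro X
    ext
    have e1 := congr_app (DerivedCategory.singleFunctorsPostcompQIso_hom_hom
      (C := ModuleCat.{u} R₂) 0) X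
    have e2 := congr_app (DerivedCategory.singleFunctorsPostcompQIso_inv_hom
      (C := ModuleCat.{u} R₁) 0) ((ModuleCat.restrictScalars f).obj X)
    change (ModuleCat.restrictScalars f).mapDerivedCategory.map
        (((DerivedCategory.singleFunctorsPostcompQIso (ModuleCat.{u} R₂)).hom.hom 0).app X) ≫
      (ModuleCat.restrictScalars f).mapDerivedCategoryFactors.hom.app _ ≫
      DerivedCategory.Q.map ((HomologicalComplex.singleMapHomologicalComplex
        (ModuleCat.restrictScalars f) (ComplexShape.up ℤ) 0).hom.app X) ≫
      ((DerivedCategory.singleFunctorsPostcompQIso (ModuleCat.{u} R₁)).inv.hom 0).app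
        ((ModuleCat.restrictScalars f).obj X) =
      (ModuleCat.restrictScalars f).mapDerivedCategory.map (𝟙 _) ≫ 𝟙 _ ≫
      (ModuleCat.restrictScalars f).mapDerivedCategoryFactors.hom.app _ ≫ 𝟙 _ ≫
      DerivedCategory.Q.map ((HomologicalComplex.singleMapHomologicalComplex
        (ModuleCat.restrictScalars f) (ComplexShape.up ℤ) 0).hom.app X) ≫ 𝟙 _ ≫ 𝟙 _
    rw [e1, e2]
    simp only [Category.id_comp]
    rfl
  apply Abelian.Ext.homEquiv.injective
  unfold extRestrict
  rw [Equiv.apply_symm_apply, key, key]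
  refine Eq.trans ?_ (Abelian.Ext.mapExactFunctor_hom (ModuleCat.restrictScalars f) α).symm
  simp [ShiftedHom.map]

attribute [local simp] Ext.mapExactFunctor_comp Ext.mapExactFunctor_mk₀
  Ext.mapExactFunctor_extClass

attribute [local instance] Ext.subsingleton_of_projective in
lemma mapExt_bijective_of_acyclic {C D : Type*} [Category C] [Category D] [Abelian C] [Abelian D]
    (F : C ⥤ D) [F.Additive] [Limits.PreservesFiniteLimits F] [Limits.PreservesFiniteColimits F]
    [F.Full] [F.Faithful] [HasExt C] [HasExt D] (Y : C)
    (h : ∀ X : C, ∃ P : ProjectivePresentation X,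
      ∀ n : ℕ, Subsingleton (Ext (F.obj P.p) (F.obj Y) (n + 1))) (X : C) (n : ℕ) :
    Function.Bijective (F.mapExtAddHom X Y n) := by
  induction n generalizing X with
  | zero => simpa [Ext.mapExactFunctor₀] using ⟨F.map_injective, F.map_surjective⟩
  | succ n hn =>
    obtain ⟨P, hP⟩ := h X
    let S := ShortComplex.mk _ _ (Limits.kernel.condition P.f)
    have : Subsingleton (Ext (S.map F).X₂ (F.obj Y) (n + 1)) := hP n
    have hS : S.ShortExact := { exact := ShortComplex.exact_kernel P.f }
    exact AddMonoidHom.bijective_of_surjective_of_bijective_of_right_exact _ _ _ _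
      (F.mapExtAddHom S.X₂ Y n) (F.mapExtAddHom S.X₁ Y n) (F.mapExtAddHom S.X₃ Y (n + 1))
      (by cat_disch) (by cat_disch)
      ((ShortComplex.ab_exact_iff_function_exact _).1
        (Ext.contravariant_sequence_exact₁' hS Y n (n + 1) (add_comm 1 n)))
      ((ShortComplex.ab_exact_iff_function_exact _).1
        (Ext.contravariant_sequence_exact₁' (hS.map F) (F.obj Y) n (n + 1) (add_comm 1 n)))
      (hn _).surjective (hn _)
      (fun x₃ ↦ Ext.contravariant_sequence_exact₃ hS _ x₃ (by subsingleton) (add_comm 1 n))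
      (fun y₃ ↦ Ext.contravariant_sequence_exact₃ (hS.map F) _ y₃ (by subsingleton) (add_comm 1 n))

lemma quotByIdealProj_surjective (A : Type u) [Ring A] (I : Ideal A) :
    Function.Surjective (quotByIdealProj A I) :=
  RingQuot.mkRingHom_surjective _

lemma quotByIdealProj_eq_zero_iff (A : Type u) [Ring A] (I : Ideal A)
    (htwosided : ∀ x ∈ I, ∀ a : A, x * a ∈ I) (a : A) :
    quotByIdealProj A I a = 0 ↔ a ∈ I := by
  constructor
  · intro h
    have : I.IsTwoSided := ⟨fun {x} b hx => htwosided x hx b⟩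
    let g := RingQuot.lift (r := fun a b : A => a ∈ I ∧ b = 0)
      ⟨Ideal.Quotient.mk I, by
        rintro x y ⟨hx, rfl⟩
        rw [map_zero]
        exact Ideal.Quotient.eq_zero_iff_mem.2 hx⟩
    have h2 : g (RingQuot.mkRingHom _ a) = g 0 := congrArg g h
    rw [RingQuot.lift_mkRingHom_apply, map_zero] at h2
    exact Ideal.Quotient.eq_zero_iff_mem.1 h2
  · intro h
    have := RingQuot.mkRingHom_rel (r := fun a b : A => a ∈ I ∧ b = 0) ⟨h, rfl⟩
    rw [map_zero] at this
    exact this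

instance quotByIdealProj_full (A : Type u) [Ring A] (I : Ideal A) :
    (ModuleCat.restrictScalars.{u} (quotByIdealProj A I)).Full where
  map_surjective {X Y} g := by
    refine ⟨ModuleCat.ofHom
      { toFun := fun x => g.hom x
        map_add' := fun x y => g.hom.map_add x y
        map_smul' := fun b x => ?_ }, rfl⟩
    obtain ⟨a, rfl⟩ := quotByIdealProj_surjective A I b
    exact g.hom.map_smul a x

/-- The canonical linear map `A^(J) → B^(J)`. -/
noncomputable def finsuppProjLin (A : Type u) [Ring A] (I : Ideal A) (J : Type u) :
    (J →₀ A) →ₗ[A] ((ModuleCat.restrictScalars.{u} (quotByIdealProj A I)).obj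
      (ModuleCat.of (QuotByIdeal A I) (J →₀ QuotByIdeal A I)) : ModuleCat.{u} A) where
  toFun x := (Finsupp.mapRange (quotByIdealProj A I) (map_zero _) x : J →₀ QuotByIdeal A I)
  map_add' x y := Finsupp.mapRange_add (fun a b => map_add _ a b) x y
  map_smul' a x := by
    change Finsupp.mapRange (quotByIdealProj A I) (map_zero _) (a • x) =
      quotByIdealProj A I a • Finsupp.mapRange (quotByIdealProj A I) (map_zero _) x
    ext j
    simp

/-- The canonical map `A^(J) → B^(J)`. -/
noncomputable def finsuppProj (A : Type u) [Ring A] (I : Ideal A) (J : Type u) :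
    ModuleCat.of A (J →₀ A) ⟶ (ModuleCat.restrictScalars.{u} (quotByIdealProj A I)).obj
      (ModuleCat.of (QuotByIdeal A I) (J →₀ QuotByIdeal A I)) :=
  (ModuleCat.homEquiv (N := (ModuleCat.restrictScalars.{u} (quotByIdealProj A I)).obj
    (ModuleCat.of (QuotByIdeal A I) (J →₀ QuotByIdeal A I)))).symm (finsuppProjLin A I J)

/-- The canonical map `I^(J) → A^(J)`. -/
noncomputable def finsuppIncl (A : Type u) [Ring A] (I : Ideal A) (J : Type u) :
    ModuleCat.of A (J →₀ I) ⟶ ModuleCat.of A (J →₀ A) :=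
  ModuleCat.ofHom (Finsupp.mapRange.linearMap I.subtype)

lemma finsuppIncl_comp (A : Type u) [Ring A] (I : Ideal A)
    (htwosided : ∀ x ∈ I, ∀ a : A, x * a ∈ I) (J : Type u) :
    finsuppIncl A I J ≫ finsuppProj A I J = 0 := by
  apply ModuleCat.hom_ext
  apply LinearMap.ext
  intro x
  change Finsupp.mapRange (quotByIdealProj A I) (map_zero _)
    (Finsupp.mapRange I.subtype (map_zero _) x) = 0
  ext j
  simp [quotByIdealProj_eq_zero_iff A I htwosided]

lemma finsupp_shortExact (A : Type u) [Ring A] (I : Ideal A)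
    (htwosided : ∀ x ∈ I, ∀ a : A, x * a ∈ I) (J : Type u) :
    (ShortComplex.mk _ _ (finsuppIncl_comp A I htwosided J)).ShortExact where
  exact := by
    rw [ShortComplex.moduleCat_exact_iff]
    intro x hx
    classical
    have hx' : Finsupp.mapRange (quotByIdealProj A I) (map_zero _) (x : J →₀ A) = 0 := hx
    refine ⟨(Finsupp.mapRange (fun a => if h : a ∈ I then (⟨a, h⟩ : I) else 0) (by simp)
      (x : J →₀ A) : J →₀ I), ?_⟩
    change Finsupp.mapRange I.subtype (map_zero _) (Finsupp.mapRange _ _ (x : J →₀ A)) = _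
    ext j
    have hj : (x : J →₀ A) j ∈ I := by
      rw [← quotByIdealProj_eq_zero_iff A I htwosided]
      simpa using DFunLike.congr_fun hx' j
    simp only [Finsupp.mapRange_apply]
    rw [dif_pos hj]
    rfl
  mono_f := by
    rw [ModuleCat.mono_iff_injective]
    exact Finsupp.mapRange_injective _ (map_zero _) I.injective_subtype
  epi_g := by
    rw [ModuleCat.epi_iff_surjective]
    exact Finsupp.mapRange_surjective _ (map_zero _) (quotByIdealProj_surjective A I)

lemma finsuppIdeal_projective (A : Type u) [Ring A] (I : Ideal A)
    (hproj : Module.Projective A ↥I) (J : Type u) :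
    Projective (ModuleCat.of A (J →₀ I)) := by
  classical
  have : Module.Projective A (J →₀ I) :=
    Module.Projective.of_equiv (finsuppLequivDFinsupp (ι := J) (M := I) A).symm
  exact ModuleCat.projective_of_categoryTheory_projective (ModuleCat.of A (J →₀ I))

lemma finsuppIdeal_hom_eq_zero (A : Type u) [Ring A] (I : Ideal A)
    (htwosided : ∀ x ∈ I, ∀ a : A, x * a ∈ I)
    (hidem : Submodule.span A {z : A | ∃ p ∈ I, ∃ q ∈ I, z = p * q} = I)
    (J : Type u) (W : ModuleCat.{u} (QuotByIdeal A I))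
    (g : ModuleCat.of A (J →₀ I) ⟶
      (ModuleCat.restrictScalars.{u} (quotByIdealProj A I)).obj W) : g = 0 := by
  apply ModuleCat.hom_ext
  refine Finsupp.lhom_ext fun j b => ?_
  obtain ⟨b, hb⟩ := b
  change g.hom (Finsupp.single j ⟨b, hb⟩) = 0
  let h : I →ₗ[A] (ModuleCat.restrictScalars.{u} (quotByIdealProj A I)).obj W :=
    g.hom ∘ₗ Finsupp.lsingle j
  suffices H : ∀ b ∈ Submodule.span A {z : A | ∃ p ∈ I, ∃ q ∈ I, z = p * q},
      ∀ hb : b ∈ I, h ⟨b, hb⟩ = 0 from H b (hidem.symm ▸ hb) hb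
  intro b hb
  induction hb using Submodule.span_induction with
  | mem x hx =>
    obtain ⟨p, hp, q, hq, rfl⟩ := hx
    intro hb
    have : (⟨p * q, hb⟩ : I) = p • ⟨q, hq⟩ := rfl
    rw [this, map_smul]
    change quotByIdealProj A I p • (show W from h ⟨q, hq⟩) = 0
    rw [(quotByIdealProj_eq_zero_iff A I htwosided p).2 hp, zero_smul]
  | zero => intro hb; exact map_zero h
  | add x y hx hy ihx ihy =>
    intro hb
    have hx' : x ∈ I := hidem ▸ hx
    have hy' : y ∈ I := hidem ▸ hy
    have : (⟨x + y, hb⟩ : I) = ⟨x, hx'⟩ + ⟨y, hy'⟩ := rfl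
    rw [this, map_add, ihx, ihy, add_zero]
  | smul a x hx ih =>
    intro hb
    have hx' : x ∈ I := hidem ▸ hx
    have : (⟨a • x, hb⟩ : I) = a • ⟨x, hx'⟩ := rfl
    rw [this, map_smul, ih, smul_zero]

lemma finsupp_ext_subsingleton (A : Type u) [Ring A] (I : Ideal A)
    (htwosided : ∀ x ∈ I, ∀ a : A, x * a ∈ I)
    (hidem : Submodule.span A {z : A | ∃ p ∈ I, ∃ q ∈ I, z = p * q} = I)
    (hproj : Module.Projective A ↥I)
    (J : Type u) (W : ModuleCat.{u} (QuotByIdeal A I)) (n : ℕ) :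
    Subsingleton (Ext ((ModuleCat.restrictScalars.{u} (quotByIdealProj A I)).obj
      (ModuleCat.of (QuotByIdeal A I) (J →₀ QuotByIdeal A I)))
      ((ModuleCat.restrictScalars.{u} (quotByIdealProj A I)).obj W) (n + 1)) := by
  refine subsingleton_of_forall_eq 0 fun x => ?_
  have : Projective (ModuleCat.of A (J →₀ A)) :=
    ModuleCat.projective_of_free (Finsupp.basisSingleOne (R := A) (ι := J))
  have := finsuppIdeal_projective A I hproj J
  obtain ⟨y, rfl⟩ := Ext.contravariant_sequence_exact₃ (finsupp_shortExact A I htwosided J) _ x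
    (Ext.eq_zero_of_projective _) (add_comm 1 n)
  have hy : y = 0 := by
    cases n with
    | zero =>
      obtain ⟨g, rfl⟩ := (Ext.mk₀_bijective _ _).2 y
      rw [finsuppIdeal_hom_eq_zero A I htwosided hidem J W g, Ext.mk₀_zero]
    | succ n => exact Ext.eq_zero_of_projective _
  rw [hy, Ext.comp_zero]

/-- **Extension compatibility.**  Let `A` be a ring and `I` a two-sided ideal
which is idempotent (`I·I = I`) and projective as a left `A`-module, and let
`B := A / I`.  Then for all `B`-modules `V`, `W` and all `n ≥ 0`, the natural
map `Ext^n_B(V, W) → Ext^n_A(V, W)` induced by restriction of scalars along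
`A → B` is an isomorphism of abelian groups. -/
theorem ext_restriction_bijective (A : Type u) [Ring A] (I : Ideal A)
    (htwosided : ∀ x ∈ I, ∀ a : A, x * a ∈ I)
    (hidem : Submodule.span A {z : A | ∃ p ∈ I, ∃ q ∈ I, z = p * q} = I)
    (hproj : Module.Projective A ↥I)
    (V W : ModuleCat.{u} (QuotByIdeal A I)) (n : ℕ) :
    Function.Bijective
        (fun α : Abelian.Ext V W n => extRestrict (quotByIdealProj A I) α) ∧
      ∀ α β : Abelian.Ext V W n,
        extRestrict (quotByIdealProj A I) (α + β) =
          extRestrict (quotByIdealProj A I) α + extRestrict (quotByIdealProj A I) β := by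
  have hb := mapExt_bijective_of_acyclic (ModuleCat.restrictScalars.{u} (quotByIdealProj A I)) W
    (fun X => ⟨{
      p := ModuleCat.of (QuotByIdeal A I) (X →₀ QuotByIdeal A I)
      projective := ModuleCat.projective_of_free
        (Finsupp.basisSingleOne (R := QuotByIdeal A I) (ι := X))
      f := ModuleCat.ofHom (Finsupp.linearCombination (QuotByIdeal A I) id)
      epi := by
        rw [ModuleCat.epi_iff_surjective]
        exact Finsupp.linearCombination_id_surjective _ _ },
      fun n => finsupp_ext_subsingleton A I htwosided hidem hproj X W n⟩) V n
  simp only [extRestrict_eq_mapExactFunctor]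
  exact ⟨hb, fun α β => Ext.mapExactFunctor_add _ _ _ _ α β⟩
end

section
/- The images of the six elements e, f, a, b, c, b² form a basis of A as a K-module; in particular A is a free K-module of rank 6. -/
universe u

open CategoryTheory

/-- The five generators of the quiver algebra: two vertices `e`, `f`, arrows
`a : e → f`, `c : f → e` and a loop `b` at `e`. -/
inductive QGen : Type
  | e | f | a | b | c

/-- The defining relations of the quiver algebra. -/
inductive qRel (K : Type u) [CommRing K] (z : K) :
    FreeAlgebra K QGen → FreeAlgebra K QGen → Prop
  | idem_e : qRel K z (FreeAlgebra.ι K QGen.e * FreeAlgebra.ι K QGen.e)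
      (FreeAlgebra.ι K QGen.e)
  | idem_f : qRel K z (FreeAlgebra.ι K QGen.f * FreeAlgebra.ι K QGen.f)
      (FreeAlgebra.ι K QGen.f)
  | ef : qRel K z (FreeAlgebra.ι K QGen.e * FreeAlgebra.ι K QGen.f) 0
  | fe : qRel K z (FreeAlgebra.ι K QGen.f * FreeAlgebra.ι K QGen.e) 0
  | sum : qRel K z (FreeAlgebra.ι K QGen.e + FreeAlgebra.ι K QGen.f) 1
  | a_sandwich : qRel K z (FreeAlgebra.ι K QGen.a)
      (FreeAlgebra.ι K QGen.f * FreeAlgebra.ι K QGen.a * FreeAlgebra.ι K QGen.e)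
  | c_sandwich : qRel K z (FreeAlgebra.ι K QGen.c)
      (FreeAlgebra.ι K QGen.e * FreeAlgebra.ι K QGen.c * FreeAlgebra.ι K QGen.f)
  | b_sandwich : qRel K z (FreeAlgebra.ι K QGen.b)
      (FreeAlgebra.ι K QGen.e * FreeAlgebra.ι K QGen.b * FreeAlgebra.ι K QGen.e)
  | ab : qRel K z (FreeAlgebra.ι K QGen.a * FreeAlgebra.ι K QGen.b) 0
  | bc : qRel K z (FreeAlgebra.ι K QGen.b * FreeAlgebra.ι K QGen.c) 0
  | ac : qRel K z (FreeAlgebra.ι K QGen.a * FreeAlgebra.ι K QGen.c)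
      (z • FreeAlgebra.ι K QGen.f)
  | bb_ca : qRel K z (FreeAlgebra.ι K QGen.b * FreeAlgebra.ι K QGen.b +
      FreeAlgebra.ι K QGen.c * FreeAlgebra.ι K QGen.a)
      (z • FreeAlgebra.ι K QGen.e)

/-- The quiver algebra `A` of the example: the path algebra of the quiver with
vertices `e`, `f`, arrows `a : e → f`, `c : f → e` and loop `b` at `e`, modulo
the relations `0 = ab = bc = ac - z·f = b² + ca - z·e`. -/
def QuiverAlg (K : Type u) [CommRing K] (z : K) : Type u :=
  RingQuot (qRel K z)

noncomputable instance (K : Type u) [CommRing K] (z : K) : Ring (QuiverAlg K z) :=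
  inferInstanceAs (Ring (RingQuot _))

noncomputable instance (K : Type u) [CommRing K] (z : K) : Algebra K (QuiverAlg K z) :=
  inferInstanceAs (Algebra K (RingQuot _))

/-- The images of the five generators in the quiver algebra. -/
noncomputable def gen (K : Type u) [CommRing K] (z : K) (g : QGen) : QuiverAlg K z :=
  RingQuot.mkAlgHom K (qRel K z) (FreeAlgebra.ι K g)

/-- Matrices of left multiplication by the generators in the basis `e, f, a, b, c, b²`. -/
def qMat (K : Type u) [CommRing K] (z : K) : QGen → Matrix (Fin 6) (Fin 6) K
  | QGen.e => !![1,0,0,0,0,0; 0,0,0,0,0,0; 0,0,0,0,0,0; 0,0,0,1,0,0; 0,0,0,0,1,0; 0,0,0,0,0,1]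
  | QGen.f => !![0,0,0,0,0,0; 0,1,0,0,0,0; 0,0,1,0,0,0; 0,0,0,0,0,0; 0,0,0,0,0,0; 0,0,0,0,0,0]
  | QGen.a => !![0,0,0,0,0,0; 0,0,0,0,z,0; 1,0,0,0,0,0; 0,0,0,0,0,0; 0,0,0,0,0,0; 0,0,0,0,0,0]
  | QGen.b => !![0,0,0,0,0,0; 0,0,0,0,0,0; 0,0,0,0,0,0; 1,0,0,0,0,z; 0,0,0,0,0,0; 0,0,0,1,0,0]
  | QGen.c => !![0,0,z,0,0,0; 0,0,0,0,0,0; 0,0,0,0,0,0; 0,0,0,0,0,0; 0,1,0,0,0,0; 0,0,-1,0,0,0]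

set_option maxHeartbeats 4000000 in
lemma qMat_rel (K : Type u) [CommRing K] (z : K) (x y : FreeAlgebra K QGen) (h : qRel K z x y) :
    FreeAlgebra.lift K (qMat K z) x = FreeAlgebra.lift K (qMat K z) y := by
  cases h <;> simp only [map_mul, map_add, map_smul, map_one, map_zero, FreeAlgebra.lift_ι_apply]
    <;> ext i j <;> fin_cases i <;> fin_cases j <;>
    simp [qMat, Matrix.mul_apply, Fin.sum_univ_six]

/-- The left regular representation. -/
noncomputable def qHom (K : Type u) [CommRing K] (z : K) :
    QuiverAlg K z →ₐ[K] Matrix (Fin 6) (Fin 6) K :=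
  RingQuot.liftAlgHom K ⟨FreeAlgebra.lift K (qMat K z), fun {x y} h => qMat_rel K z x y h⟩

lemma qHom_gen (K : Type u) [CommRing K] (z : K) (g : QGen) :
    qHom K z (gen K z g) = qMat K z g := by
  have := RingQuot.liftAlgHom_mkAlgHom_apply K (FreeAlgebra.lift K (qMat K z))
    (s := qRel K z) (fun {x y} h => qMat_rel K z x y h) (FreeAlgebra.ι K g)
  rw [FreeAlgebra.lift_ι_apply] at this
  exact this

/-- The quotient map. -/
noncomputable def qMk (K : Type u) [CommRing K] (z : K) :
    FreeAlgebra K QGen →ₐ[K] QuiverAlg K z :=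
  RingQuot.mkAlgHom K (qRel K z)

lemma qMk_rel (K : Type u) [CommRing K] (z : K) {x y : FreeAlgebra K QGen} (h : qRel K z x y) :
    qMk K z x = qMk K z y := RingQuot.mkAlgHom_rel K h

lemma qMk_ι (K : Type u) [CommRing K] (z : K) (g : QGen) :
    qMk K z (FreeAlgebra.ι K g) = gen K z g := rfl

/-- The family `e, f, a, b, c, b²`. -/
noncomputable def qFam (K : Type u) [CommRing K] (z : K) : Fin 6 → QuiverAlg K z :=
  ![gen K z QGen.e, gen K z QGen.f, gen K z QGen.a,
        gen K z QGen.b, gen K z QGen.c, gen K z QGen.b * gen K z QGen.b]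

set_option maxHeartbeats 4000000 in
lemma gen_mul_fam (K : Type u) [CommRing K] (z : K) (g : QGen) (j : Fin 6) :
    gen K z g * qFam K z j = ∑ i, qMat K z g i j • qFam K z i := by
  have h1 := qMk_rel K z qRel.idem_e
  have h2 := qMk_rel K z qRel.idem_f
  have h3 := qMk_rel K z qRel.ef
  have h4 := qMk_rel K z qRel.fe
  have h6 := qMk_rel K z qRel.a_sandwich
  have h7 := qMk_rel K z qRel.c_sandwich
  have h8 := qMk_rel K z qRel.b_sandwich
  have h9 := qMk_rel K z qRel.ab
  have h10 := qMk_rel K z qRel.bc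
  have h11 := qMk_rel K z qRel.ac
  have h12 := qMk_rel K z qRel.bb_ca
  simp only [map_mul, map_add, map_smul, map_zero, qMk_ι] at *
  have key : ∀ i, qFam K z i = ![gen K z QGen.e, gen K z QGen.f, gen K z QGen.a,
        gen K z QGen.b, gen K z QGen.c, gen K z QGen.b * gen K z QGen.b] i := fun _ => rfl
  generalize hx : gen K z QGen.e = e at *
  generalize hf : gen K z QGen.f = f at *
  generalize ha : gen K z QGen.a = a at *
  generalize hb : gen K z QGen.b = b at *
  generalize hc : gen K z QGen.c = c at *
  have ea : e * a = 0 := by rw [h6, ← mul_assoc, ← mul_assoc, h3]; simp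
  have fa : f * a = a := by rw [h6, ← mul_assoc, ← mul_assoc, h2]
  have ae : a * e = a := by rw [h6, mul_assoc, h1]
  have af : a * f = 0 := by rw [h6, mul_assoc, h3]; simp
  have ec : e * c = c := by rw [h7, ← mul_assoc, ← mul_assoc, h1]
  have fc : f * c = 0 := by rw [h7, ← mul_assoc, ← mul_assoc, h4]; simp
  have ce : c * e = 0 := by rw [h7, mul_assoc, h4]; simp
  have cf : c * f = c := by rw [h7, mul_assoc, h2]
  have eb : e * b = b := by rw [h8, ← mul_assoc, ← mul_assoc, h1]
  have fb : f * b = 0 := by rw [h8, ← mul_assoc, ← mul_assoc, h4]; simp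
  have be : b * e = b := by rw [h8, mul_assoc, h1]
  have bf : b * f = 0 := by rw [h8, mul_assoc, h3]; simp
  have aa : a * a = 0 := by rw [← fa, ← mul_assoc, mul_assoc f a f, af]; simp
  have ba : b * a = 0 := by rw [← fa, ← mul_assoc, bf]; simp
  have cc : c * c = 0 := by rw [← ec, ← mul_assoc, mul_assoc e c e, ce]; simp
  have cb : c * b = 0 := by rw [← eb, ← mul_assoc, ce]; simp
  have ca : c * a = z • e - b * b := by rw [← h12]; abel
  have b3 : b * (b * b) = z • b := by
    have : b * (b * b + c * a) = b * (z • e) := by rw [h12]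
    rw [mul_add, ← mul_assoc b c a, h10] at this
    simpa [be] using this
  have eb2 : e * (b * b) = b * b := by rw [← mul_assoc, eb]
  have fb2 : f * (b * b) = 0 := by rw [← mul_assoc, fb, zero_mul]
  have ab2 : a * (b * b) = 0 := by rw [← mul_assoc, h9, zero_mul]
  have cb2 : c * (b * b) = 0 := by rw [← mul_assoc, cb, zero_mul]
  rw [Fin.sum_univ_six]
  simp only [key]
  cases g <;> fin_cases j <;>
    simp [qMat, hf, ha, hb, hc, hx, h1, h2, h3, h4, h9, h10, h11, ea, fa, ae, af, ec, fc, ce, cf, eb, fb, be, bf,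
      aa, ba, cc, cb, ca, b3, eb2, fb2, ab2, cb2, sub_eq_add_neg]

/-- **Basis of the quiver algebra.**  The images of `e, f, a, b, c, b²` form a
basis of `A` as a `K`-module; in particular `A` is a free `K`-module of
rank `6`. -/
theorem quiverAlg_basis (K : Type u) [CommRing K] (z : K) :
    ∃ bas : Module.Basis (Fin 6) K (QuiverAlg K z),
      ∀ i, bas i = ![gen K z QGen.e, gen K z QGen.f, gen K z QGen.a,
        gen K z QGen.b, gen K z QGen.c, gen K z QGen.b * gen K z QGen.b] i := by
  have hli : LinearIndependent K (qFam K z) := by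
    rw [Fintype.linearIndependent_iff]
    intro g hg i
    have h := congrArg (fun x => (qHom K z x).mulVec ![1,1,0,0,0,0] i) hg
    simp only [Fin.sum_univ_six, qFam, map_add, map_smul, map_zero, map_mul, qHom_gen] at h
    fin_cases i <;>
      simpa [qMat, qHom_gen, Matrix.mulVec, dotProduct, Matrix.mul_apply, Fin.sum_univ_six] using h
  have hmul : ∀ (x : FreeAlgebra K QGen) (y), y ∈ Submodule.span K (Set.range (qFam K z)) →
      qMk K z x * y ∈ Submodule.span K (Set.range (qFam K z)) := by
    intro x
    induction x using FreeAlgebra.induction with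
    | grade0 r =>
      intro y hy
      rw [AlgHom.commutes, ← Algebra.smul_def]
      exact Submodule.smul_mem _ _ hy
    | grade1 g =>
      intro y hy
      rw [qMk_ι]
      induction hy using Submodule.span_induction with
      | mem y hy =>
        obtain ⟨j, rfl⟩ := hy
        rw [gen_mul_fam]
        exact Submodule.sum_mem _ fun i _ =>
          Submodule.smul_mem _ _ (Submodule.subset_span ⟨i, rfl⟩)
      | zero => simp
      | add x y _ _ hx hy => rw [mul_add]; exact Submodule.add_mem _ hx hy
      | smul r x _ hx => rw [mul_smul_comm]; exact Submodule.smul_mem _ _ hx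
    | mul x y hx hy =>
      intro w hw
      rw [map_mul, mul_assoc]
      exact hx _ (hy _ hw)
    | add x y hx hy =>
      intro w hw
      rw [map_add, add_mul]
      exact Submodule.add_mem _ (hx _ hw) (hy _ hw)
  have hone : (1 : QuiverAlg K z) ∈ Submodule.span K (Set.range (qFam K z)) := by
    have h := qMk_rel K z qRel.sum
    rw [map_add, map_one, qMk_ι, qMk_ι] at h
    rw [← h]
    exact Submodule.add_mem _ (Submodule.subset_span ⟨0, rfl⟩) (Submodule.subset_span ⟨1, rfl⟩)
  have hsp : ⊤ ≤ Submodule.span K (Set.range (qFam K z)) := by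
    intro y _
    obtain ⟨x, rfl⟩ : ∃ x, qMk K z x = y := RingQuot.mkAlgHom_surjective K (qRel K z) y
    simpa using hmul x 1 hone
  exact ⟨Module.Basis.mk hli hsp, fun i => by rw [Module.Basis.mk_apply]; rfl⟩
end

section
/- One has the following K-module decompositions inside A: e·A·e is the free K-module with basis {e, b, b²}, e·A·f is the free K-module with basis {c}, f·A·e is the free K-module with basis {a}, and f·A·f is the free K-module with basis {f}. -/
universe u

open CategoryTheory

/-- The `K`-linear "sandwich" map `x ↦ u * x * v` on the quiver algebra. -/
noncomputable def sandwich (K : Type u) [CommRing K] (z : K) (u v : QuiverAlg K z) :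
    QuiverAlg K z →ₗ[K] QuiverAlg K z :=
  (LinearMap.mulLeft K u).comp (LinearMap.mulRight K v)

set_option linter.unusedSimpArgs false

section QHelpers

variable (K : Type u) [CommRing K] (z : K)

theorem q_of_rel {x y : FreeAlgebra K QGen} (h : qRel K z x y) :
    (RingQuot.mkAlgHom K (qRel K z) x : RingQuot (qRel K z)) = RingQuot.mkAlgHom K (qRel K z) y :=
  RingQuot.mkAlgHom_rel K h

/-- The quotient map. -/
noncomputable def qmk : FreeAlgebra K QGen →ₐ[K] QuiverAlg K z :=
  RingQuot.mkAlgHom K (qRel K z)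

theorem qmk_rel {x y : FreeAlgebra K QGen} (h : qRel K z x y) : qmk K z x = qmk K z y :=
  RingQuot.mkAlgHom_rel K h

theorem qmk_ι (g : QGen) : qmk K z (FreeAlgebra.ι K g) = gen K z g := rfl

theorem qmk_surj : Function.Surjective (qmk K z) := RingQuot.mkAlgHom_surjective K (qRel K z)

theorem r_ee : gen K z .e * gen K z .e = gen K z .e := by
  simpa [qmk_ι] using qmk_rel K z .idem_e
theorem r_ff : gen K z .f * gen K z .f = gen K z .f := by
  simpa [qmk_ι] using qmk_rel K z .idem_f
theorem r_ef : gen K z .e * gen K z .f = 0 := by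
  simpa [qmk_ι] using qmk_rel K z .ef
theorem r_fe : gen K z .f * gen K z .e = 0 := by
  simpa [qmk_ι] using qmk_rel K z .fe
theorem r_sum : gen K z .e + gen K z .f = 1 := by
  simpa [qmk_ι] using qmk_rel K z .sum
theorem r_a : gen K z .a = gen K z .f * gen K z .a * gen K z .e := by
  simpa [qmk_ι] using qmk_rel K z .a_sandwich
theorem r_c : gen K z .c = gen K z .e * gen K z .c * gen K z .f := by
  simpa [qmk_ι] using qmk_rel K z .c_sandwich
theorem r_b : gen K z .b = gen K z .e * gen K z .b * gen K z .e := by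
  simpa [qmk_ι] using qmk_rel K z .b_sandwich
theorem r_ab : gen K z .a * gen K z .b = 0 := by
  simpa [qmk_ι] using qmk_rel K z .ab
theorem r_bc : gen K z .b * gen K z .c = 0 := by
  simpa [qmk_ι] using qmk_rel K z .bc
theorem r_ac : gen K z .a * gen K z .c = z • gen K z .f := by
  simpa [qmk_ι] using qmk_rel K z .ac
theorem r_ca : gen K z .c * gen K z .a = z • gen K z .e - gen K z .b * gen K z .b := by
  have : gen K z .b * gen K z .b + gen K z .c * gen K z .a = z • gen K z .e := by
    simpa [qmk_ι] using qmk_rel K z .bb_ca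
  rw [← this]; abel

theorem r_fa : gen K z .f * gen K z .a = gen K z .a := by
  rw [r_a, ← mul_assoc, ← mul_assoc, r_ff]
theorem r_ae : gen K z .a * gen K z .e = gen K z .a := by
  rw [r_a, mul_assoc, r_ee]
theorem r_ec : gen K z .e * gen K z .c = gen K z .c := by
  rw [r_c, ← mul_assoc, ← mul_assoc, r_ee]
theorem r_cf : gen K z .c * gen K z .f = gen K z .c := by
  rw [r_c, mul_assoc, r_ff]
theorem r_eb : gen K z .e * gen K z .b = gen K z .b := by
  rw [r_b, ← mul_assoc, ← mul_assoc, r_ee]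
theorem r_be : gen K z .b * gen K z .e = gen K z .b := by
  rw [r_b, mul_assoc, r_ee]
theorem r_ea : gen K z .e * gen K z .a = 0 := by
  rw [← r_fa, ← mul_assoc, r_ef, zero_mul]
theorem r_af : gen K z .a * gen K z .f = 0 := by
  rw [← r_ae, mul_assoc, r_ef, mul_zero]
theorem r_fc : gen K z .f * gen K z .c = 0 := by
  rw [← r_ec, ← mul_assoc, r_fe, zero_mul]
theorem r_ce : gen K z .c * gen K z .e = 0 := by
  rw [← r_cf, mul_assoc, r_fe, mul_zero]
theorem r_fb : gen K z .f * gen K z .b = 0 := by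
  rw [← r_eb, ← mul_assoc, r_fe, zero_mul]
theorem r_bf : gen K z .b * gen K z .f = 0 := by
  rw [← r_be, mul_assoc, r_ef, mul_zero]
theorem r_aa : gen K z .a * gen K z .a = 0 := by
  rw [← r_fa, mul_assoc, ← mul_assoc (gen K z .a), r_af, zero_mul, mul_zero]
theorem r_ba : gen K z .b * gen K z .a = 0 := by
  rw [← r_fa, ← mul_assoc, r_bf, zero_mul]
theorem r_cb : gen K z .c * gen K z .b = 0 := by
  rw [← r_eb, ← mul_assoc, r_ce, zero_mul]
theorem r_cc : gen K z .c * gen K z .c = 0 := by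
  rw [← r_ec, mul_assoc, ← mul_assoc (gen K z .c), r_ce, zero_mul, mul_zero]
theorem r_bbb : gen K z .b * (gen K z .b * gen K z .b) = z • gen K z .b := by
  have h : gen K z .b * (gen K z .c * gen K z .a) = 0 := by rw [← mul_assoc, r_bc, zero_mul]
  rw [r_ca, mul_sub, mul_smul_comm, r_be, sub_eq_zero] at h
  exact h.symm

theorem assoc0 {x y : QuiverAlg K z} (h : x * y = 0) (w) : x * (y * w) = 0 := by
  rw [← mul_assoc, h, zero_mul]
theorem assoc1 {x y v : QuiverAlg K z} (h : x * y = v) (w) : x * (y * w) = v * w := by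
  rw [← mul_assoc, h]

/-- Normal form. -/
def NF (x : QuiverAlg K z) : Prop := ∃ p q r s t u : K,
  x = p • gen K z .e + q • gen K z .b + r • (gen K z .b * gen K z .b) + s • gen K z .c
    + t • gen K z .a + u • gen K z .f

theorem NF_add {x y} (hx : NF K z x) (hy : NF K z y) : NF K z (x + y) := by
  obtain ⟨p, q, r, s, t, u, rfl⟩ := hx
  obtain ⟨p', q', r', s', t', u', rfl⟩ := hy
  exact ⟨p + p', q + q', r + r', s + s', t + t', u + u', by module⟩

theorem NF_gen_mul (g : QGen) {x} (hx : NF K z x) : NF K z (gen K z g * x) := by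
  obtain ⟨p, q, r, s, t, u, rfl⟩ := hx
  cases g <;> simp only [mul_add, mul_smul_comm, r_ee, r_ff, r_ef, r_fe, r_ab, r_bc, r_ac, r_ca,
    r_fa, r_ae, r_ec, r_cf, r_eb, r_be, r_ea, r_af, r_fc, r_ce, r_fb, r_bf, r_aa, r_ba, r_cb,
    r_cc, r_bbb, assoc0 K z (r_fb K z), assoc0 K z (r_ab K z), assoc0 K z (r_cb K z),
    assoc1 K z (r_eb K z)]
  · exact ⟨p, q, r, s, 0, 0, by module⟩
  · exact ⟨0, 0, 0, 0, t, u, by module⟩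
  · exact ⟨0, 0, 0, 0, p, s * z, by module⟩
  · exact ⟨0, p + r * z, q, 0, 0, 0, by module⟩
  · exact ⟨t * z, 0, -t, u, 0, 0, by module⟩

theorem NF_smul (k : K) {x} (hx : NF K z x) : NF K z (k • x) := by
  obtain ⟨p, q, r, s, t, u, rfl⟩ := hx
  exact ⟨k * p, k * q, k * r, k * s, k * t, k * u, by module⟩

theorem NF_all (x : QuiverAlg K z) : NF K z x := by
  obtain ⟨w, rfl⟩ := qmk_surj K z x
  have key : ∀ y, NF K z y → NF K z (qmk K z w * y) := by
    induction w using FreeAlgebra.induction with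
    | grade0 k =>
      intro y hy
      rw [AlgHom.commutes, ← Algebra.smul_def]
      exact NF_smul K z k hy
    | grade1 g => intro y hy; exact NF_gen_mul K z g hy
    | mul a b ha hb => intro y hy; rw [map_mul, mul_assoc]; exact ha _ (hb _ hy)
    | add a b ha hb => intro y hy; rw [map_add, add_mul]; exact NF_add K z (ha _ hy) (hb _ hy)
  have := key 1 ⟨1, 0, 0, 0, 0, 1, by rw [← r_sum]; module⟩
  rwa [mul_one] at this

/-- The left regular representation on `A e`. -/
def qmat : QGen → Matrix (Fin 4) (Fin 4) K
  | .e => !![1,0,0,0; 0,1,0,0; 0,0,1,0; 0,0,0,0]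
  | .f => !![0,0,0,0; 0,0,0,0; 0,0,0,0; 0,0,0,1]
  | .a => !![0,0,0,0; 0,0,0,0; 0,0,0,0; 1,0,0,0]
  | .b => !![0,0,0,0; 1,0,z,0; 0,1,0,0; 0,0,0,0]
  | .c => !![0,0,0,z; 0,0,0,0; 0,0,0,-1; 0,0,0,0]

/-- The representation of the quiver algebra. -/
noncomputable def qrep : QuiverAlg K z →ₐ[K] Matrix (Fin 4) (Fin 4) K :=
  RingQuot.liftAlgHom K ⟨FreeAlgebra.lift K (qmat K z), by
    intro x y h
    cases h <;> simp only [map_mul, map_add, map_smul, map_zero, map_one,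
      FreeAlgebra.lift_ι_apply] <;> ext i j <;> fin_cases i <;> fin_cases j <;>
      simp [qmat, Matrix.mul_apply, Fin.sum_univ_four]⟩

theorem qrep_gen (g : QGen) : qrep K z (gen K z g) = qmat K z g := by
  unfold qrep gen
  exact (RingQuot.liftAlgHom_mkAlgHom_apply ..).trans (FreeAlgebra.lift_ι_apply ..)

theorem sandwich_apply (u v x) : sandwich K z u v x = u * (x * v) := rfl

theorem single_li (g : QGen) (i j : Fin 4) (h : IsUnit (qmat K z g i j)) :
    LinearIndependent K ![gen K z g] := by
  rw [Fintype.linearIndependent_iff]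
  intro k hk n
  have h1 := congrArg (fun x => qrep K z x i j) hk
  simp [qrep_gen] at h1
  rw [h.mul_left_eq_zero] at h1
  fin_cases n
  exact h1

end QHelpers

/-- **Peirce decomposition of the quiver algebra.**  `e·A·e` is the free
`K`-module with basis `{e, b, b²}`, `e·A·f` is free with basis `{c}`,
`f·A·e` is free with basis `{a}` and `f·A·f` is free with basis `{f}`. -/
theorem quiverAlg_peirce (K : Type u) [CommRing K] (z : K) :
    (LinearMap.range (sandwich K z (gen K z QGen.e) (gen K z QGen.e)) =
        Submodule.span K {gen K z QGen.e, gen K z QGen.b,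
          gen K z QGen.b * gen K z QGen.b} ∧
      LinearIndependent K
        ![gen K z QGen.e, gen K z QGen.b, gen K z QGen.b * gen K z QGen.b]) ∧
    (LinearMap.range (sandwich K z (gen K z QGen.e) (gen K z QGen.f)) =
        Submodule.span K {gen K z QGen.c} ∧
      LinearIndependent K ![gen K z QGen.c]) ∧
    (LinearMap.range (sandwich K z (gen K z QGen.f) (gen K z QGen.e)) =
        Submodule.span K {gen K z QGen.a} ∧
      LinearIndependent K ![gen K z QGen.a]) ∧
    (LinearMap.range (sandwich K z (gen K z QGen.f) (gen K z QGen.f)) =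
        Submodule.span K {gen K z QGen.f} ∧
      LinearIndependent K ![gen K z QGen.f]) := by
  refine ⟨⟨?_, ?_⟩, ⟨?_, ?_⟩, ⟨?_, ?_⟩, ?_, ?_⟩
  · apply le_antisymm
    · rintro _ ⟨x, rfl⟩
      obtain ⟨p, q, r, s, t, u, rfl⟩ := NF_all K z x
      rw [Submodule.mem_span_triple]
      refine ⟨p, q, r, ?_⟩
      simp only [sandwich_apply, add_mul, smul_mul_assoc, mul_add, mul_smul_comm, mul_assoc,
        r_ee, r_be, r_ce, r_ae, r_fe, r_eb, r_ea, assoc1 K z (r_eb K z), smul_zero, mul_zero,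
        add_zero]
    · rw [Submodule.span_le]
      rintro _ (rfl | rfl | rfl)
      · exact ⟨gen K z .e, by simp only [sandwich_apply, r_ee]⟩
      · exact ⟨gen K z .b, by simp only [sandwich_apply, r_be, r_eb]⟩
      · exact ⟨gen K z .b * gen K z .b, by
          simp only [sandwich_apply, mul_assoc, r_be, assoc1 K z (r_eb K z)]⟩
  · rw [Fintype.linearIndependent_iff]
    intro k hk
    have h (i : Fin 4) := congrArg (fun x => qrep K z x i 0) hk
    have h0 := h 0
    have h1 := h 1
    have h2 := h 2
    simp [Fin.sum_univ_three, qrep_gen, qmat, Matrix.mul_apply, Fin.sum_univ_four] at h0 h1 h2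
    intro i
    fin_cases i
    · exact h0
    · exact h1
    · exact h2
  · apply le_antisymm
    · rintro _ ⟨x, rfl⟩
      obtain ⟨p, q, r, s, t, u, rfl⟩ := NF_all K z x
      rw [Submodule.mem_span_singleton]
      refine ⟨s, ?_⟩
      simp only [sandwich_apply, add_mul, smul_mul_assoc, mul_add, mul_smul_comm, mul_assoc,
        r_ee, r_be, r_ce, r_ae, r_fe, r_eb, r_ea, r_ef, r_bf, r_cf, r_af, r_ff, r_ec, r_fc, r_fa,
        r_fb, assoc0 K z (r_fb K z), smul_zero, mul_zero, add_zero, zero_add]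
    · rw [Submodule.span_le]
      rintro _ rfl
      exact ⟨gen K z .c, by simp only [sandwich_apply, r_cf, r_ec, r_ae, r_fa, r_ff]⟩
  · exact single_li K z .c 2 3 (by simp [qmat])
  · apply le_antisymm
    · rintro _ ⟨x, rfl⟩
      obtain ⟨p, q, r, s, t, u, rfl⟩ := NF_all K z x
      rw [Submodule.mem_span_singleton]
      refine ⟨t, ?_⟩
      simp only [sandwich_apply, add_mul, smul_mul_assoc, mul_add, mul_smul_comm, mul_assoc,
        r_ee, r_be, r_ce, r_ae, r_fe, r_eb, r_ea, r_ef, r_bf, r_cf, r_af, r_ff, r_ec, r_fc, r_fa,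
        r_fb, assoc0 K z (r_fb K z), smul_zero, mul_zero, add_zero, zero_add]
    · rw [Submodule.span_le]
      rintro _ rfl
      exact ⟨gen K z .a, by simp only [sandwich_apply, r_cf, r_ec, r_ae, r_fa, r_ff]⟩
  · exact single_li K z .a 3 0 (by simp [qmat])
  · apply le_antisymm
    · rintro _ ⟨x, rfl⟩
      obtain ⟨p, q, r, s, t, u, rfl⟩ := NF_all K z x
      rw [Submodule.mem_span_singleton]
      refine ⟨u, ?_⟩
      simp only [sandwich_apply, add_mul, smul_mul_assoc, mul_add, mul_smul_comm, mul_assoc,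
        r_ee, r_be, r_ce, r_ae, r_fe, r_eb, r_ea, r_ef, r_bf, r_cf, r_af, r_ff, r_ec, r_fc, r_fa,
        r_fb, assoc0 K z (r_fb K z), smul_zero, mul_zero, add_zero, zero_add]
    · rw [Submodule.span_le]
      rintro _ rfl
      exact ⟨gen K z .f, by simp only [sandwich_apply, r_cf, r_ec, r_ae, r_fa, r_ff]⟩
  · exact single_li K z .f 3 3 (by simp [qmat])
end
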